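/- The numbers 897783067 and 897849649 are both prime, both are congruent to 127 modulo 486, and 897783067^(1/282866) < 897849649^(1/282867) (equivalently, 897783067^282867 < 897849649^282866). -/

import Mathlib

/-- Modular exponentiation by repeated squaring (`f` bounds the number of binary digits). -/
def fastPowMod (m : ℕ) : ℕ → ℕ → ℕ → ℕ
  | 0, _, _ => 1 % m
  | f + 1, a, k =>
    if k % 2 = 0 then fastPowMod m f (a * a % m) (k / 2)
    else fastPowMod m f (a * a % m) (k / 2) * a % m

lemma fastPowMod_eq (m : ℕ) : ∀ f a k : ℕ, k < 2 ^ f → fastPowMod m f a k = a ^ k % m := by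
  intro f
  induction f with
  | zero =>
    intro a k hk
    have : k = 0 := by simpa using hk
    simp [fastPowMod, this]
  | succ f ih =>
    intro a k hk
    have hk2 : k / 2 < 2 ^ f := by rw [pow_succ] at hk; omega
    have hsq : (a * a % m) ^ (k / 2) % m = a ^ (2 * (k / 2)) % m := by
      rw [← Nat.pow_mod, pow_mul, pow_two]
    rw [fastPowMod, ih _ _ hk2, hsq]
    split_ifs with h
    · congr 2
      omega
    · rw [Nat.mod_mul_mod, ← pow_succ]
      congr 2
      omega

/-- Lucas primality test, with the powers computed in the naturals. -/
lemma lucas_of_nat (p a : ℕ) (hp : 1 < p) (ha : a ^ (p - 1) % p = 1)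
    (hd : ∀ q : ℕ, q.Prime → q ∣ p - 1 → a ^ ((p - 1) / q) % p ≠ 1) : p.Prime := by
  have key : ∀ k : ℕ, (a : ZMod p) ^ k = 1 ↔ a ^ k % p = 1 := by
    intro k
    have h := ZMod.natCast_eq_natCast_iff' (a ^ k) 1 p
    rw [Nat.mod_eq_of_lt hp] at h
    push_cast at h
    exact h
  exact lucas_primality p a ((key _).2 ha) fun q hq hqd h => hd q hq hqd ((key _).1 h)

/-- Lucas primality certificate with witness 2. -/
lemma prime_first : Nat.Prime 897783067 := by
  apply lucas_of_nat 897783067 2 (by norm_num) (by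
    rw [← fastPowMod_eq _ 30 _ _ (by norm_num)]; decide +kernel)
  intro q hq hd
  have hf : 897783067 - 1 = 2 * 3 * 3 * 127 * 433 * 907 := by norm_num
  rw [hf] at hd
  simp only [hq.dvd_mul] at hd
  have hs : q = 2 ∨ q = 3 ∨ q = 127 ∨ q = 433 ∨ q = 907 := by
    have aux : ∀ r : ℕ, r.Prime → q ∣ r → q = r :=
      fun r hr h => (Nat.prime_dvd_prime_iff_eq hq hr).1 h
    have h2 := aux 2 (by norm_num)
    have h3 := aux 3 (by norm_num)
    have h127 := aux 127 (by norm_num)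
    have h433 := aux 433 (by norm_num)
    have h907 := aux 907 (by norm_num)
    tauto
  rcases hs with rfl | rfl | rfl | rfl | rfl <;>
    (rw [← fastPowMod_eq _ 30 _ _ (by norm_num)]; decide +kernel)

/-- Lucas primality certificate with witness 26. -/
lemma prime_second : Nat.Prime 897849649 := by
  apply lucas_of_nat 897849649 26 (by norm_num) (by
    rw [← fastPowMod_eq _ 30 _ _ (by norm_num)]; decide +kernel)
  intro q hq hd
  have hf : 897849649 - 1 = 2 * 2 * 2 * 2 * 3 * 3 * 47 * 132661 := by norm_num
  rw [hf] at hd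
  simp only [hq.dvd_mul] at hd
  have hs : q = 2 ∨ q = 3 ∨ q = 47 ∨ q = 132661 := by
    have aux : ∀ r : ℕ, r.Prime → q ∣ r → q = r :=
      fun r hr h => (Nat.prime_dvd_prime_iff_eq hq hr).1 h
    have h2 := aux 2 (by norm_num)
    have h3 := aux 3 (by norm_num)
    have h47 := aux 47 (by norm_num)
    have h132661 := aux 132661 (by norm_num)
    tauto
  rcases hs with rfl | rfl | rfl | rfl <;>
    (rw [← fastPowMod_eq _ 30 _ _ (by norm_num)]; decide +kernel)

/-- The key logarithmic inequality. -/
lemma key_log_ineq :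
    282867 * Real.log 897783067 < 282866 * Real.log 897849649 := by
  have h1 : Real.log 897783067 < 30 * Real.log 2 := by
    have h : Real.log 897783067 < Real.log ((2 : ℝ) ^ 30) :=
      Real.log_lt_log (by norm_num) (by norm_num)
    rw [Real.log_pow] at h
    exact_mod_cast h
  have h2 := Real.log_two_lt_d9
  have h3 : 1 - ((897849649 : ℝ) / 897783067)⁻¹ ≤ Real.log ((897849649 : ℝ) / 897783067) :=
    Real.one_sub_inv_le_log_of_pos (by norm_num)
  rw [Real.log_div (by norm_num) (by norm_num)] at h3
  norm_num at h3 h2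
  linarith

/-- The numbers 897783067 and 897849649 are both prime, both congruent to 127 mod 486,
and `897783067^(1/282866) < 897849649^(1/282867)`
(equivalently, `897783067^282867 < 897849649^282866`). -/
theorem sun_firoozbakht_counterexample :
    Nat.Prime 897783067 ∧ Nat.Prime 897849649 ∧
    897783067 % 486 = 127 ∧ 897849649 % 486 = 127 ∧
    (897783067 : ℝ) ^ ((1 : ℝ) / 282866) < (897849649 : ℝ) ^ ((1 : ℝ) / 282867) ∧
    (897783067 : ℕ) ^ 282867 < (897849649 : ℕ) ^ 282866 := by
  have key := key_log_ineq
  refine ⟨prime_first, prime_second, by norm_num, by norm_num, ?_, ?_⟩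
  · rw [← Real.log_lt_log_iff (Real.rpow_pos_of_pos (by norm_num) _)
      (Real.rpow_pos_of_pos (by norm_num) _), Real.log_rpow (by norm_num),
      Real.log_rpow (by norm_num)]
    linarith
  · have gen : ∀ m n : ℕ, (m : ℝ) * Real.log 897783067 < n * Real.log 897849649 →
        (897783067 : ℕ) ^ m < (897849649 : ℕ) ^ n := by
      intro m n h
      rw [← Real.log_pow, ← Real.log_pow,
        Real.log_lt_log_iff (by positivity) (by positivity)] at h
      exact_mod_cast h
    apply gen
    push_cast
    exact key
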